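/- If n, m, a are non-negative integers with n > 200, m ≥ 1, n − m ≥ 3, and F_n − F_m = 13^a, then n < 7.34589 · 10^{29}. -/

import Mathlib

/-!
The hypotheses are contradictory: the equation has no solution with `n > 200` and `m + 3 ≤ n`,
and this already follows from congruences.

Such a solution has `13 ^ a ≥ F_{n-2} > 13`, so `a ≥ 2` and `F_n ≡ F_m` modulo `13 ^ 2`. For a prime
`p ≠ 13` for which `13` has order `k` modulo `p`, the difference `F_n - F_m` is a power of `13` modulo
`p`, so `(F_n - F_m) ^ k ≡ 1`. The following moduli suffice:

* `169`, with Pisano period `364` (and `13`, with period `28`);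
* `233`, with period `52`, where `13` has order `116`;
* `211`, with period `42`, where `13` has order `35`;
* `859`, with period `78`, where `13` has order `11`.

All these periods divide `1092`, and no pair of residues of `n` and `m` modulo `1092` satisfies all the
congruences. This last fact is the finite verification `no_residues`; it proceeds through residues
modulo `28`, then `364`, then `1092`, discarding pairs as soon as a congruence fails.
-/

/-- The `k`-th digit of `T` in base `1000`, counted from the least significant one. A natural number
`T` encodes a table in this way, three decimal digits per entry. -/
def entry (T k : ℕ) : ℕ := T / 1000 ^ k % 1000

/-- The residues of `F_0, …, F_27` modulo `13`, read from the right. -/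
def fibTable13 : ℕ :=
  1012002010005005000005008010011012012000012001011003008008000008005003002001001000

/-- The residues of `F_0, …, F_363` modulo `169`, read from the right. -/
def fibTable169 : ℕ :=
  1168002166005161013148034114089025064130103027076120125164130034096107158118040078131116015101083018065122112010102077025052142079063016047138078060018042145066079156092064028036161044117096021075115129155143012131050081138112026086109146132014118065053012041140070070000070099140128012116065051014037146060086143112031081119131157143014129054075148096052044008036141064077156090066024042151060091138122016106079027052144077067010057122104018086101154116038078129118011107073034039164044120093027066130105025080114135148156161164166167168168000168001167003164008156021135055080144105039066142093049044005039135073062011051129091038053154068086151104047057159067092144117027090106153122031091109151127024103090013077105141133008125052073148094054040014026157038119088031057143083060023037155051104116157128029099099000099070029041157053104118155132023109083026057138088050038012026155040115094021073117125161133028105092013079103145127018109078031047153063090142117025092102159112047065151083068015053131091040051158062096135130005125049076142103039064144089055034021013008005003002001001000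

/-- The residues of `F_0, …, F_41` modulo `211`, read from the right. -/
def fibTable211 : ℕ :=
  1210002208005203013190034156089067022045188068120159172198185013172052120143188166022144089055034021013008005003002001001000

/-- The residues of `F_0, …, F_51` modulo `233`, read from the right. -/
def fibTable233 : ℕ :=
  1232002230005225013212034178089089000089144178199212220225228230231232232000232001231003228008220021199055144144000144089055034021013008005003002001001000

/-- The residues of `F_0, …, F_77` modulo `859`, read from the right. -/
def fibTable859 : ℕ :=
  1858002856005851013838034804089715233482610731738852745107638328310018292585566019547331216115101014087786160626393233160073087845101744216528547840566274292841310531638752745007738128610377233144089055034021013008005003002001001000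

/-- A table that satisfies the Fibonacci recurrence cyclically modulo `M` gives all the residues of
the Fibonacci numbers, and its length `N` is a period. -/
lemma fib_mod_eq_entry {M N T : ℕ} (hM : 1 < M) (hN : 1 < N) (h0 : entry T 0 = 0)
    (h1 : entry T 1 = 1)
    (hrec : ∀ k < N, entry T ((k + 2) % N) = (entry T k + entry T ((k + 1) % N)) % M) (n : ℕ) :
    Nat.fib n % M = entry T (n % N) := by
  suffices h : Nat.fib n % M = entry T (n % N) ∧ Nat.fib (n + 1) % M = entry T ((n + 1) % N) from h.1
  induction n with
  | zero => simp [h0, h1, Nat.mod_eq_of_lt hN, Nat.mod_eq_of_lt hM]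
  | succ n ih =>
    refine ⟨ih.2, ?_⟩
    have h := hrec (n % N) (Nat.mod_lt _ (by omega))
    rw [Nat.mod_add_mod, Nat.mod_add_mod, ← ih.1, ← ih.2, ← Nat.add_mod] at h
    rw [show n + 1 + 1 = n + 2 from rfl, Nat.fib_add_two, h]

lemma fib_mod_13 (n : ℕ) : Nat.fib n % 13 = entry fibTable13 (n % 28) :=
  fib_mod_eq_entry (by norm_num) (by norm_num) (by decide +kernel) (by decide +kernel)
    (by decide +kernel) n

lemma fib_mod_169 (n : ℕ) : Nat.fib n % 169 = entry fibTable169 (n % 364) :=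
  fib_mod_eq_entry (by norm_num) (by norm_num) (by decide +kernel) (by decide +kernel)
    (by decide +kernel) n

lemma fib_mod_211 (n : ℕ) : Nat.fib n % 211 = entry fibTable211 (n % 42) :=
  fib_mod_eq_entry (by norm_num) (by norm_num) (by decide +kernel) (by decide +kernel)
    (by decide +kernel) n

lemma fib_mod_233 (n : ℕ) : Nat.fib n % 233 = entry fibTable233 (n % 52) :=
  fib_mod_eq_entry (by norm_num) (by norm_num) (by decide +kernel) (by decide +kernel)
    (by decide +kernel) n

lemma fib_mod_859 (n : ℕ) : Nat.fib n % 859 = entry fibTable859 (n % 78) :=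
  fib_mod_eq_entry (by norm_num) (by norm_num) (by decide +kernel) (by decide +kernel)
    (by decide +kernel) n

/-- The difference `x - y`, taken modulo `p` for residues `x` and `y ≤ p`, is a `k`-th root of unity
modulo `p`. Adding `p - y` avoids truncated subtraction. -/
abbrev IsRootOfUnityDiff (p k x y : ℕ) : Prop := (x + (p - y)) ^ k % p = 1

lemma isRootOfUnityDiff_of_fib {n m a p k : ℕ} (h : Nat.fib n = Nat.fib m + 13 ^ a) (hp : 1 < p)
    (hk : 13 ^ k % p = 1) : IsRootOfUnityDiff p k (Nat.fib n % p) (Nat.fib m % p) := by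
  have hlt : Nat.fib m % p < p := Nat.mod_lt _ (by omega)
  have hd : Nat.fib n % p + (p - Nat.fib m % p) ≡ 13 ^ a [MOD p] := by
    apply Nat.ModEq.add_right_cancel' (Nat.fib m % p)
    rw [add_assoc, Nat.sub_add_cancel hlt.le, h, add_comm (13 ^ a)]
    simp [Nat.ModEq]
  have h13 : 13 ^ k ≡ 1 [MOD p] := by rw [Nat.ModEq, hk, Nat.mod_eq_of_lt hp]
  have hpow : (13 ^ a) ^ k ≡ 1 [MOD p] := by
    simpa [← pow_mul, mul_comm] using h13.pow a
  exact Eq.trans ((hd.pow k).trans hpow) (Nat.mod_eq_of_lt hp)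

set_option synthInstance.maxSize 100000 in
set_option synthInstance.maxHeartbeats 200000 in
/-- No residues `n₀ + 28 i + 364 u` and `m₀ + 28 j + 364 v` of `n` and `m` modulo `1092` satisfy all
the congruences. -/
lemma no_residues : ∀ n₀ < 28, ∀ m₀ < 28, entry fibTable13 n₀ = entry fibTable13 m₀ →
    ∀ i < 13, ∀ j < 13,
    entry fibTable169 (n₀ + 28 * i) = entry fibTable169 (m₀ + 28 * j) →
    IsRootOfUnityDiff 233 116 (entry fibTable233 ((n₀ + 28 * i) % 52))
      (entry fibTable233 ((m₀ + 28 * j) % 52)) →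
    ∀ u < 3, ∀ v < 3,
    IsRootOfUnityDiff 211 35 (entry fibTable211 ((n₀ + 28 * i + 364 * u) % 42))
      (entry fibTable211 ((m₀ + 28 * j + 364 * v) % 42)) →
    ¬ IsRootOfUnityDiff 859 11 (entry fibTable859 ((n₀ + 28 * i + 364 * u) % 78))
      (entry fibTable859 ((m₀ + 28 * j + 364 * v) % 78)) := by
  decide +kernel

lemma fib_ne_fib_add_pow_thirteen (n m a : ℕ) (ha : 2 ≤ a) :
    Nat.fib n ≠ Nat.fib m + 13 ^ a := by
  intro h
  have h169 : Nat.fib n % 169 = Nat.fib m % 169 := by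
    obtain ⟨b, rfl⟩ := Nat.exists_eq_add_of_le ha
    rw [h, pow_add]
    omega
  have h13 : Nat.fib n % 13 = Nat.fib m % 13 := by omega
  have h211 := isRootOfUnityDiff_of_fib (p := 211) (k := 35) h (by norm_num) (by norm_num)
  have h233 := isRootOfUnityDiff_of_fib (p := 233) (k := 116) h (by norm_num) (by norm_num)
  have h859 := isRootOfUnityDiff_of_fib (p := 859) (k := 11) h (by norm_num) (by norm_num)
  have split364 (x : ℕ) : x % 28 + 28 * (x / 28 % 13) = x % 364 := by omega
  have split1092 (x : ℕ) : x % 364 + 364 * (x / 364 % 3) = x % 1092 := by omega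
  have key := no_residues (n % 28) (Nat.mod_lt _ (by norm_num)) (m % 28)
    (Nat.mod_lt _ (by norm_num)) (by rw [← fib_mod_13, ← fib_mod_13, h13])
    (n / 28 % 13) (Nat.mod_lt _ (by norm_num)) (m / 28 % 13) (Nat.mod_lt _ (by norm_num))
  rw [split364, split364] at key
  have key' := key (by rw [← fib_mod_169, ← fib_mod_169, h169])
    (by
      rw [Nat.mod_mod_of_dvd n (by norm_num : 52 ∣ 364), Nat.mod_mod_of_dvd m (by norm_num : 52 ∣ 364),
        ← fib_mod_233, ← fib_mod_233]
      exact h233)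
    (n / 364 % 3) (Nat.mod_lt _ (by norm_num)) (m / 364 % 3) (Nat.mod_lt _ (by norm_num))
  rw [split1092, split1092, Nat.mod_mod_of_dvd n (by norm_num : 42 ∣ 1092),
    Nat.mod_mod_of_dvd m (by norm_num : 42 ∣ 1092), Nat.mod_mod_of_dvd n (by norm_num : 78 ∣ 1092),
    Nat.mod_mod_of_dvd m (by norm_num : 78 ∣ 1092), ← fib_mod_211, ← fib_mod_211, ← fib_mod_859,
    ← fib_mod_859] at key'
  exact key' h211 h859


/-- If `n > 200`, `m ≥ 1`, `n - m ≥ 3` and `F_n - F_m = 13 ^ a`, then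
`n < 7.34589 · 10^29`. -/
theorem fib_sub_fib_pow_thirteen_bound (n m a : ℕ) (hn : 200 < n) (hm : 1 ≤ m)
    (hnm : 3 ≤ n - m) (h : (Nat.fib n : ℤ) - Nat.fib m = 13 ^ a) :
    (n : ℝ) < 7.34589 * 10 ^ 29 := by
  exfalso
  have hnat : Nat.fib n = Nat.fib m + 13 ^ a := by
    have h' : (Nat.fib n : ℤ) = Nat.fib m + 13 ^ a := by linarith
    exact_mod_cast h'
  refine fib_ne_fib_add_pow_thirteen n m a ?_ hnat
  by_contra! ha
  have hpow : 13 ^ a ≤ 13 ^ 1 := Nat.pow_le_pow_right (by norm_num) (by omega)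
  have hfib : Nat.fib n = Nat.fib (n - 2) + Nat.fib (n - 1) := by
    obtain ⟨k, rfl⟩ := Nat.exists_eq_add_of_le' (show 2 ≤ n by omega)
    exact Nat.fib_add_two
  have hmono : Nat.fib m ≤ Nat.fib (n - 1) := Nat.fib_mono (by omega)
  have hlarge : n - 2 ≤ Nat.fib (n - 2) := Nat.le_fib_self (by omega)
  omega
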